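/- arXiv:1807.05054 — 3 statements merged into one kernel-verified Lean document; each statement's English description precedes it below -/
import Mathlib

section
/- Let X be a measurable space, D a probability measure on X, f : X → Bool a measurable target function, and H a finite set of measurable hypotheses h : X → Bool. For any ε with 0 < ε < 1, the probability under the m-fold product measure D^m that there exists h ∈ H with err_D(h) > ε that is nevertheless consistent with f on all m coordinates of the sample is at most |H| · (1 − ε)^m. -/
open MeasureTheory
open scoped ENNReal

/-- Union-bound step of the Simultaneous Occam Theorem: the probability that some
hypothesis in the finite class `H` with error `> ε` is nevertheless consistent with
the target `f` on all `m` sample coordinates is at most `|H| * (1 - ε) ^ m`. -/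
theorem stmt_1 {X : Type*} [MeasurableSpace X] (D : Measure X) [IsProbabilityMeasure D]
    (f : X → Bool) (hf : Measurable f)
    (H : Finset (X → Bool)) (hH : ∀ h ∈ H, Measurable h)
    (m : ℕ) (ε : ℝ≥0∞) (hε0 : 0 < ε) (hε1 : ε < 1) :
    (Measure.pi fun _ : Fin m => D)
        {s | ∃ h ∈ H, ε < D {x | h x ≠ f x} ∧ ∀ i, h (s i) = f (s i)}
      ≤ (H.card : ℝ≥0∞) * (1 - ε) ^ m := by
  have key : ∀ h ∈ H, (Measure.pi fun _ : Fin m => D)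
      {s | ε < D {x | h x ≠ f x} ∧ ∀ i, h (s i) = f (s i)} ≤ (1 - ε) ^ m := by
    intro h hh
    by_cases he : ε < D {x | h x ≠ f x}
    · have hset : {s : Fin m → X | ε < D {x | h x ≠ f x} ∧ ∀ i, h (s i) = f (s i)}
          = Set.pi Set.univ (fun _ : Fin m => {x | h x = f x}) := by
        ext s
        simp only [Set.mem_setOf_eq, Set.mem_pi, Set.mem_univ, forall_true_left]
        exact ⟨fun a => a.2, fun a => ⟨he, a⟩⟩
      have hmeas : MeasurableSet {x | h x ≠ f x} :=
        (measurableSet_eq_fun (hH h hh) hf).compl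
      have hc : {x | h x = f x} = {x | h x ≠ f x}ᶜ := by
        ext x
        simp
      rw [hset, Measure.pi_pi, Finset.prod_const, Finset.card_univ, Fintype.card_fin, hc,
        prob_compl_eq_one_sub hmeas]
      exact pow_le_pow_left' (tsub_le_tsub_left he.le 1) m
    · have hset : {s : Fin m → X | ε < D {x | h x ≠ f x} ∧ ∀ i, h (s i) = f (s i)} = ∅ := by
        ext s
        simp only [Set.mem_setOf_eq, Set.mem_empty_iff_false, iff_false]
        exact fun a => he a.1
      rw [hset, measure_empty]
      exact zero_le
  have hU : {s : Fin m → X | ∃ h ∈ H, ε < D {x | h x ≠ f x} ∧ ∀ i, h (s i) = f (s i)}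
      = ⋃ h ∈ H, {s : Fin m → X | ε < D {x | h x ≠ f x} ∧ ∀ i, h (s i) = f (s i)} := by
    ext s
    simp only [Set.mem_setOf_eq, Set.mem_iUnion, exists_prop]
  rw [hU]
  refine (measure_biUnion_finset_le H _).trans ((Finset.sum_le_sum key).trans ?_)
  rw [Finset.sum_const, nsmul_eq_mul]
end

section
/- Let X be a measurable space, D a probability measure on X, f : X → Bool a measurable target function, H a finite nonempty set of measurable hypotheses h : X → Bool, and let 0 < ε < 1 and 0 < δ ≤ 1. If m ≥ (1/ε) · ln(|H|/δ), then with probability at least 1 − δ under the m-fold product measure D^m, every hypothesis h ∈ H that is consistent with f on all m coordinates of the sample satisfies err_D(h) ≤ ε. -/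
open MeasureTheory
open scoped ENNReal

/-- Part 1 of the Simultaneous Occam Theorem: if `m ≥ (1/ε) * ln (|H| / δ)`, then
with probability at least `1 - δ` over an `m`-sample from `D`, every hypothesis in
the finite nonempty class `H` that is consistent with the target `f` on all `m`
coordinates has error at most `ε`. -/
theorem stmt_3 {X : Type*} [MeasurableSpace X] (D : Measure X) [IsProbabilityMeasure D]
    (f : X → Bool) (hf : Measurable f)
    (H : Finset (X → Bool)) (hHne : H.Nonempty) (hH : ∀ h ∈ H, Measurable h)
    (ε δ : ℝ) (hε0 : 0 < ε) (hε1 : ε < 1) (hδ0 : 0 < δ) (hδ1 : δ ≤ 1)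
    (m : ℕ) (hm : (1 / ε) * Real.log ((H.card : ℝ) / δ) ≤ (m : ℝ)) :
    ENNReal.ofReal (1 - δ) ≤
      (Measure.pi fun _ : Fin m => D)
        {s | ∀ h ∈ H, (∀ i, h (s i) = f (s i)) →
          D {x | h x ≠ f x} ≤ ENNReal.ofReal ε} := by
  classical
  set S : Set (Fin m → X) := {s | ∀ h ∈ H, (∀ i, h (s i) = f (s i)) →
          D {x | h x ≠ f x} ≤ ENNReal.ofReal ε} with hS
  have hcard : (0 : ℝ) < (H.card : ℝ) := by exact_mod_cast hHne.card_pos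
  have hreal : (1 - ε) ^ m ≤ δ / H.card := by
    have h1 : (1 - ε) ^ m ≤ Real.exp (-ε) ^ m :=
      pow_le_pow_left₀ (by linarith) (Real.one_sub_le_exp_neg ε) m
    have h2 : Real.log ((H.card : ℝ) / δ) ≤ ε * m := by
      have := mul_le_mul_of_nonneg_left hm hε0.le
      rwa [← mul_assoc, mul_one_div_cancel hε0.ne', one_mul] at this
    have h3 : (H.card : ℝ) / δ ≤ Real.exp (ε * m) :=
      (Real.log_le_iff_le_exp (by positivity)).1 h2
    have h4 : Real.exp (-ε) ^ m = (Real.exp (ε * m))⁻¹ := by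
      rw [← Real.exp_nat_mul, ← Real.exp_neg]
      congr 1
      ring
    rw [h4] at h1
    refine h1.trans ?_
    rw [← inv_div]
    exact inv_anti₀ (by positivity) h3
  have hbad : ∀ h ∈ H, (Measure.pi fun _ : Fin m => D)
      {s | (∀ i, h (s i) = f (s i)) ∧ ENNReal.ofReal ε < D {x | h x ≠ f x}}
        ≤ ENNReal.ofReal (δ / H.card) := by
    intro h hh
    by_cases hlt : ENNReal.ofReal ε < D {x | h x ≠ f x}
    · have hset : {s : Fin m → X | (∀ i, h (s i) = f (s i)) ∧
          ENNReal.ofReal ε < D {x | h x ≠ f x}} =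
          Set.univ.pi fun _ : Fin m => {x | h x = f x} := by
        ext s
        simp [hlt, Set.mem_pi]
      have hmeas : MeasurableSet {x | h x ≠ f x} :=
        (measurableSet_eq_fun (hH h hh) hf).compl
      have hD : D {x | h x = f x} ≤ ENNReal.ofReal (1 - ε) := by
        have hc : {x | h x = f x} = {x | h x ≠ f x}ᶜ := by
          ext x
          simp
        rw [hc, prob_compl_eq_one_sub hmeas, ENNReal.ofReal_sub _ hε0.le, ENNReal.ofReal_one]
        exact tsub_le_tsub_left hlt.le 1
      rw [hset, Measure.pi_pi]
      simp only [Finset.prod_const, Finset.card_univ, Fintype.card_fin]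
      calc D {x | h x = f x} ^ m ≤ ENNReal.ofReal (1 - ε) ^ m := by gcongr
        _ = ENNReal.ofReal ((1 - ε) ^ m) := (ENNReal.ofReal_pow (by linarith) m).symm
        _ ≤ _ := ENNReal.ofReal_le_ofReal hreal
    · simp [hlt]
  have hcompl : (Measure.pi fun _ : Fin m => D) Sᶜ ≤ ENNReal.ofReal δ := by
    have hsub : Sᶜ ⊆ ⋃ h ∈ H,
        {s | (∀ i, h (s i) = f (s i)) ∧ ENNReal.ofReal ε < D {x | h x ≠ f x}} := by
      intro s hs
      simp only [hS, Set.mem_compl_iff, Set.mem_setOf_eq, not_forall, not_le] at hs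
      obtain ⟨h, hh, hc, hl⟩ := hs
      exact Set.mem_biUnion hh ⟨hc, hl⟩
    refine (measure_mono hsub).trans ((measure_biUnion_finset_le _ _).trans
      ((Finset.sum_le_sum hbad).trans ?_))
    rw [Finset.sum_const, nsmul_eq_mul, ← ENNReal.ofReal_natCast,
      ← ENNReal.ofReal_mul hcard.le, mul_div_cancel₀ _ hcard.ne']
  rw [ENNReal.ofReal_sub _ hδ0.le, ENNReal.ofReal_one, tsub_le_iff_right]
  calc (1 : ℝ≥0∞) = (Measure.pi fun _ : Fin m => D) (S ∪ Sᶜ) := by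
        rw [Set.union_compl_self, measure_univ]
    _ ≤ _ := measure_union_le _ _
    _ ≤ _ := by gcongr
end

section
/- Let X be a measurable space, D a probability measure on X, and f_1, …, f_N : X → Bool measurable target functions. Let H be a finite nonempty set of measurable hypotheses h : X → Bool, and let 0 < ε < 1 and 0 < δ ≤ 1. If m ≥ (1/ε) · ln(N · |H| / δ), then with probability at least 1 − δ under the m-fold product measure D^m, for every index i ∈ {1, …, N} and every hypothesis h ∈ H that agrees with f_i on all m coordinates of the sample, one has D{x | h x ≠ f_i x} ≤ ε. -/
open MeasureTheory
open scoped ENNReal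

/-- Simultaneous Occam Theorem for `N` targets: if
`m ≥ (1/ε) * ln (N * |H| / δ)`, then with probability at least `1 - δ` over an
`m`-sample from `D`, for every target `f i` and every hypothesis `h ∈ H` that
agrees with `f i` on all `m` coordinates, the error of `h` w.r.t. `f i` is at
most `ε`. -/
theorem stmt_7 {X : Type*} [MeasurableSpace X] (D : Measure X) [IsProbabilityMeasure D]
    (N : ℕ) (f : Fin N → X → Bool) (hf : ∀ i, Measurable (f i))
    (H : Finset (X → Bool)) (hHne : H.Nonempty) (hH : ∀ h ∈ H, Measurable h)
    (ε δ : ℝ) (hε0 : 0 < ε) (hε1 : ε < 1) (hδ0 : 0 < δ) (hδ1 : δ ≤ 1)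
    (m : ℕ) (hm : (1 / ε) * Real.log ((N : ℝ) * (H.card : ℝ) / δ) ≤ (m : ℝ)) :
    ENNReal.ofReal (1 - δ) ≤
      (Measure.pi fun _ : Fin m => D)
        {s | ∀ i, ∀ h ∈ H, (∀ j, h (s j) = f i (s j)) →
          D {x | h x ≠ f i x} ≤ ENNReal.ofReal ε} := by
  classical
  set P := (Measure.pi fun _ : Fin m => D) with hP
  set G : Set (Fin m → X) := {s | ∀ i, ∀ h ∈ H, (∀ j, h (s j) = f i (s j)) →
          D {x | h x ≠ f i x} ≤ ENNReal.ofReal ε} with hG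
  let A : Fin N → (X → Bool) → Set (Fin m → X) := fun i h =>
    {s | (∀ j, h (s j) = f i (s j)) ∧ ENNReal.ofReal ε < D {x | h x ≠ f i x}}
  have hsub : Gᶜ ⊆ ⋃ i ∈ (Finset.univ : Finset (Fin N)), ⋃ h ∈ H, A i h := by
    intro s hs
    simp only [hG, Set.mem_compl_iff, Set.mem_setOf_eq, not_forall, not_le] at hs
    obtain ⟨i, h, hh, hc, hb⟩ := hs
    simp only [Set.mem_iUnion]
    exact ⟨i, Finset.mem_univ i, h, hh, hc, hb⟩
  have hA : ∀ i, ∀ h ∈ H, P (A i h) ≤ ENNReal.ofReal (Real.exp (-(ε * m))) := by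
    intro i h hh
    by_cases hb : ENNReal.ofReal ε < D {x | h x ≠ f i x}
    · have hEm : MeasurableSet {x | h x = f i x} :=
        measurableSet_eq_fun (hH h hh) (hf i)
      have hsubA : A i h ⊆ Set.univ.pi fun _ : Fin m => {x | h x = f i x} := by
        intro s hs j _
        exact hs.1 j
      have hE : D {x | h x = f i x} ≤ ENNReal.ofReal (Real.exp (-ε)) := by
        have h1 : {x | h x = f i x} = {x | h x ≠ f i x}ᶜ := by
          ext x; simp
        have hm' : MeasurableSet {x | h x ≠ f i x} := hEm.compl
        rw [h1, prob_compl_eq_one_sub hm']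
        calc 1 - D {x | h x ≠ f i x} ≤ 1 - ENNReal.ofReal ε := tsub_le_tsub_left hb.le _
          _ = ENNReal.ofReal (1 - ε) := by
            rw [ENNReal.ofReal_sub _ hε0.le, ENNReal.ofReal_one]
          _ ≤ _ := ENNReal.ofReal_le_ofReal (by linarith [Real.add_one_le_exp (-ε)])
      calc P (A i h) ≤ P (Set.univ.pi fun _ : Fin m => {x | h x = f i x}) :=
            measure_mono hsubA
        _ = (D {x | h x = f i x}) ^ m := by
            rw [hP, Measure.pi_pi]; simp
        _ ≤ (ENNReal.ofReal (Real.exp (-ε))) ^ m := by gcongr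
        _ = _ := by
            rw [← ENNReal.ofReal_pow (Real.exp_pos _).le, ← Real.exp_nat_mul]
            congr 2; ring
    · have : A i h = ∅ := by
        ext s
        simp only [A, Set.mem_setOf_eq, Set.mem_empty_iff_false, iff_false]
        exact fun hs => hb hs.2
      simp [this]
  have hreal : (N : ℝ) * (H.card : ℝ) * Real.exp (-(ε * m)) ≤ δ := by
    rcases Nat.eq_zero_or_pos N with h0 | hN
    · subst h0; simp [hδ0.le]
    · have hc : 0 < (H.card : ℝ) := by exact_mod_cast hHne.card_pos
      have hN' : 0 < (N : ℝ) := by exact_mod_cast hN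
      have h1 : Real.log ((N : ℝ) * (H.card : ℝ) / δ) ≤ ε * m := by
        rw [one_div, inv_mul_le_iff₀ hε0] at hm
        exact hm
      rw [Real.log_le_iff_le_exp (by positivity), div_le_iff₀ hδ0] at h1
      rw [Real.exp_neg, ← div_eq_mul_inv, div_le_iff₀ (Real.exp_pos _)]
      linarith
  have hbad : P Gᶜ ≤ ENNReal.ofReal δ := by
    calc P Gᶜ ≤ P (⋃ i ∈ (Finset.univ : Finset (Fin N)), ⋃ h ∈ H, A i h) := measure_mono hsub
      _ ≤ ∑ i : Fin N, P (⋃ h ∈ H, A i h) := measure_biUnion_finset_le _ _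
      _ ≤ ∑ i : Fin N, ∑ h ∈ H, P (A i h) :=
          Finset.sum_le_sum fun i _ => measure_biUnion_finset_le _ _
      _ ≤ ∑ i : Fin N, ∑ h ∈ H, ENNReal.ofReal (Real.exp (-(ε * m))) :=
          Finset.sum_le_sum fun i _ => Finset.sum_le_sum fun h hh => hA i h hh
      _ = ENNReal.ofReal ((N : ℝ) * (H.card : ℝ) * Real.exp (-(ε * m))) := by
          rw [ENNReal.ofReal_mul (by positivity), ENNReal.ofReal_mul (by positivity)]
          simp [mul_assoc]
      _ ≤ _ := ENNReal.ofReal_le_ofReal hreal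
  rw [ENNReal.ofReal_sub _ hδ0.le, ENNReal.ofReal_one, tsub_le_iff_right]
  calc (1 : ℝ≥0∞) = P Set.univ := by rw [hP]; exact measure_univ.symm
    _ ≤ P G + P Gᶜ := by
        rw [← Set.union_compl_self G]; exact measure_union_le _ _
    _ ≤ _ := by gcongr
end
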